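/- arXiv:2005.12123 — 5 statements merged into one kernel-verified Lean document; each statement's English description precedes it below -/
import Mathlib

section
/- Triangle inequality for the p-feature robust Wasserstein distance: let L ≥ 1 and let (E_ℓ, d_ℓ), ℓ = 1,…,L, be metric spaces. Let p ≥ 1 be real. Let x_1,…,x_n, y_1,…,y_m, z_1,…,z_u be points of ∏_ℓ E_ℓ and let a ∈ Σ^n, b ∈ Σ^m, c ∈ Σ^u be probability weight vectors. Then FRWD_p((a,x),(c,z)) ≤ FRWD_p((a,x),(b,y)) + FRWD_p((b,y),(c,z)). -/
open scoped BigOperators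

noncomputable section

/-- The probability simplex `Σ^n ⊆ ℝ^n`. -/
def probSimplex (n : ℕ) : Set (Fin n → ℝ) :=
  {a | (∀ i, 0 ≤ a i) ∧ ∑ i, a i = 1}

/-- The transport polytope `U(a,b)` of couplings between weight vectors `a` and `b`. -/
def transportPolytope {n m : ℕ} (a : Fin n → ℝ) (b : Fin m → ℝ) :
    Set (Fin n → Fin m → ℝ) :=
  {P | (∀ i j, 0 ≤ P i j) ∧ (∀ i, ∑ j, P i j = a i) ∧ (∀ j, ∑ i, P i j = b j)}

/-- The `p`-feature robust Wasserstein distance between the weighted point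
configurations `(a, x)` and `(b, y)` in `∏ ℓ, E ℓ`:
`FRWD_p = (inf_{Π ∈ U(a,b)} sup_{α ∈ Σ^L} ∑_{i,j} Π_{ij} ∑_ℓ α_ℓ d_ℓ(x_i(ℓ), y_j(ℓ))^p)^(1/p)`. -/
def FRWD {L n m : ℕ} {E : Fin L → Type*} [∀ ℓ, MetricSpace (E ℓ)] (p : ℝ)
    (a : Fin n → ℝ) (x : Fin n → ∀ ℓ, E ℓ)
    (b : Fin m → ℝ) (y : Fin m → ∀ ℓ, E ℓ) : ℝ :=
  (sInf {v : ℝ | ∃ P ∈ transportPolytope a b,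
      v = sSup {w : ℝ | ∃ α ∈ probSimplex L,
        w = ∑ i, ∑ j, P i j * ∑ ℓ, α ℓ * dist (x i ℓ) (y j ℓ) ^ p}}) ^ (1 / p)

/-- Weighted Minkowski inequality for finite sums of nonnegative reals. -/
lemma weighted_Lp_add_le {ι : Type*} (s : Finset ι) {p : ℝ} (hp : 1 ≤ p) {w f g : ι → ℝ}
    (hw : ∀ i, 0 ≤ w i) (hf : ∀ i, 0 ≤ f i) (hg : ∀ i, 0 ≤ g i) :
    (∑ i ∈ s, w i * (f i + g i) ^ p) ^ (1 / p) ≤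
      (∑ i ∈ s, w i * f i ^ p) ^ (1 / p) + (∑ i ∈ s, w i * g i ^ p) ^ (1 / p) := by
  have hp0 : p ≠ 0 := by positivity
  have key : ∀ i t, 0 ≤ t → (w i ^ (1 / p) * t) ^ p = w i * t ^ p := fun i t ht => by
    rw [Real.mul_rpow (Real.rpow_nonneg (hw i) _) ht, ← Real.rpow_mul (hw i),
      one_div_mul_cancel hp0, Real.rpow_one]
  have h := Real.Lp_add_le_of_nonneg s (f := fun i => w i ^ (1 / p) * f i)
    (g := fun i => w i ^ (1 / p) * g i) hp
    (fun i _ => mul_nonneg (Real.rpow_nonneg (hw i) _) (hf i))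
    (fun i _ => mul_nonneg (Real.rpow_nonneg (hw i) _) (hg i))
  simpa only [← mul_add, key _ _ (hf _), key _ _ (hg _), key _ _ (add_nonneg (hf _) (hg _))]
    using h

/-- A lower bound for the `1 / p`-th powers of the elements of `V` is a lower bound for the
`1 / p`-th power of the infimum of `V`. -/
lemma le_rpow_sInf {p : ℝ} (hp : 1 ≤ p) {V : Set ℝ} (hV : V.Nonempty) (hV0 : ∀ v ∈ V, 0 ≤ v)
    {t : ℝ} (ht : ∀ v ∈ V, t ≤ v ^ (1 / p)) : t ≤ sInf V ^ (1 / p) := by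
  have hp0 : 0 < p := by positivity
  rcases le_or_gt t 0 with h | h
  · exact h.trans (Real.rpow_nonneg (Real.sInf_nonneg hV0) _)
  · rw [one_div, Real.le_rpow_inv_iff_of_pos h.le (Real.sInf_nonneg hV0) hp0]
    refine le_csInf hV fun v hv => ?_
    rw [← Real.le_rpow_inv_iff_of_pos h.le (hV0 v hv) hp0, ← one_div]
    exact ht v hv

/-- The independent coupling. -/
lemma transportPolytope_nonempty {n m : ℕ} {a : Fin n → ℝ} {b : Fin m → ℝ}
    (ha : a ∈ probSimplex n) (hb : b ∈ probSimplex m) : (transportPolytope a b).Nonempty :=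
  ⟨fun i j => a i * b j, fun i j => mul_nonneg (ha.1 i) (hb.1 j),
    fun i => by rw [← Finset.mul_sum, hb.2, mul_one],
    fun j => by rw [← Finset.sum_mul, ha.2, one_mul]⟩

/-- Gluing lemma: two couplings sharing the marginal `b` are the marginals of a common
three-fold coupling. -/
lemma exists_gluing {n m u : ℕ} {a : Fin n → ℝ} {b : Fin m → ℝ} {c : Fin u → ℝ}
    {P : Fin n → Fin m → ℝ} {Q : Fin m → Fin u → ℝ}
    (hP : P ∈ transportPolytope a b) (hQ : Q ∈ transportPolytope b c) :
    ∃ T : Fin n → Fin m → Fin u → ℝ, (∀ i j k, 0 ≤ T i j k) ∧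
      (∀ i j, ∑ k, T i j k = P i j) ∧ (∀ j k, ∑ i, T i j k = Q j k) := by
  obtain ⟨hP0, -, hPb⟩ := hP
  obtain ⟨hQ0, hQb, -⟩ := hQ
  have hb : ∀ j, 0 ≤ b j := fun j => hPb j ▸ Finset.sum_nonneg fun i _ => hP0 i j
  refine ⟨fun i j k => P i j * Q j k / b j,
    fun i j k => div_nonneg (mul_nonneg (hP0 i j) (hQ0 j k)) (hb j), fun i j => ?_, fun j k => ?_⟩
  · rw [← Finset.sum_div, ← Finset.mul_sum, hQb]
    refine mul_div_cancel_of_imp fun h => ?_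
    exact (Finset.sum_eq_zero_iff_of_nonneg fun i _ => hP0 i j).1 ((hPb j).trans h) i
      (Finset.mem_univ i)
  · rw [← Finset.sum_div, ← Finset.sum_mul, hPb]
    refine mul_div_cancel_left_of_imp fun h => ?_
    exact (Finset.sum_eq_zero_iff_of_nonneg fun k _ => hQ0 j k).1 ((hQb j).trans h) k
      (Finset.mem_univ k)

section Cost

variable {L n m u : ℕ} {E : Fin L → Type*} [∀ ℓ, MetricSpace (E ℓ)]

/-- The transport cost of the plan `P` for the feature weights `α`. -/
def featureCost (p : ℝ) (x : Fin n → ∀ ℓ, E ℓ) (y : Fin m → ∀ ℓ, E ℓ)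
    (P : Fin n → Fin m → ℝ) (α : Fin L → ℝ) : ℝ :=
  ∑ i, ∑ j, P i j * ∑ ℓ, α ℓ * dist (x i ℓ) (y j ℓ) ^ p

/-- The worst transport cost of the plan `P` over all feature weights in the simplex. -/
def robustCost (p : ℝ) (x : Fin n → ∀ ℓ, E ℓ) (y : Fin m → ∀ ℓ, E ℓ)
    (P : Fin n → Fin m → ℝ) : ℝ :=
  sSup {w : ℝ | ∃ α ∈ probSimplex L, w = featureCost p x y P α}

lemma FRWD_eq_sInf_robustCost (p : ℝ) (a : Fin n → ℝ) (x : Fin n → ∀ ℓ, E ℓ)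
    (b : Fin m → ℝ) (y : Fin m → ∀ ℓ, E ℓ) :
    FRWD p a x b y =
      sInf {v : ℝ | ∃ P ∈ transportPolytope a b, v = robustCost p x y P} ^ (1 / p) :=
  rfl

variable {p : ℝ} {x : Fin n → ∀ ℓ, E ℓ} {y : Fin m → ∀ ℓ, E ℓ} {z : Fin u → ∀ ℓ, E ℓ}
  {P : Fin n → Fin m → ℝ} {α : Fin L → ℝ}

lemma featureCost_nonneg (hP : ∀ i j, 0 ≤ P i j) (hα : α ∈ probSimplex L) :
    0 ≤ featureCost p x y P α :=
  Finset.sum_nonneg fun i _ => Finset.sum_nonneg fun j _ => mul_nonneg (hP i j) <|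
    Finset.sum_nonneg fun ℓ _ => mul_nonneg (hα.1 ℓ) (Real.rpow_nonneg dist_nonneg _)

lemma robustCost_nonneg (hP : ∀ i j, 0 ≤ P i j) : 0 ≤ robustCost p x y P := by
  refine Real.sSup_nonneg ?_
  rintro _ ⟨α, hα, rfl⟩
  exact featureCost_nonneg hP hα

lemma featureCost_le_robustCost (hP : ∀ i j, 0 ≤ P i j) (hα : α ∈ probSimplex L) :
    featureCost p x y P α ≤ robustCost p x y P := by
  refine le_csSup ⟨featureCost p x y P 1, ?_⟩ ⟨α, hα, rfl⟩
  rintro _ ⟨β, hβ, rfl⟩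
  refine Finset.sum_le_sum fun i _ => Finset.sum_le_sum fun j _ =>
    mul_le_mul_of_nonneg_left (Finset.sum_le_sum fun ℓ _ =>
      mul_le_mul_of_nonneg_right ?_ (Real.rpow_nonneg dist_nonneg _)) (hP i j)
  exact (Finset.single_le_sum (fun k _ => hβ.1 k) (Finset.mem_univ ℓ)).trans_eq hβ.2

/-- Minkowski's inequality for the marginals of a three-fold coupling. -/
lemma featureCost_rpow_le_add (hp : 1 ≤ p) (hα : α ∈ probSimplex L)
    {T : Fin n → Fin m → Fin u → ℝ} (hT : ∀ i j k, 0 ≤ T i j k) :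
    featureCost p x z (fun i k => ∑ j, T i j k) α ^ (1 / p) ≤
      featureCost p x y (fun i j => ∑ k, T i j k) α ^ (1 / p) +
        featureCost p y z (fun j k => ∑ i, T i j k) α ^ (1 / p) := by
  have hp0 : 0 ≤ p := by positivity
  let W : Fin n × Fin m × Fin u × Fin L → ℝ := fun t => T t.1 t.2.1 t.2.2.1 * α t.2.2.2
  let dxy : Fin n × Fin m × Fin u × Fin L → ℝ :=
    fun t => dist (x t.1 t.2.2.2) (y t.2.1 t.2.2.2)
  let dyz : Fin n × Fin m × Fin u × Fin L → ℝ :=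
    fun t => dist (y t.2.1 t.2.2.2) (z t.2.2.1 t.2.2.2)
  let dxz : Fin n × Fin m × Fin u × Fin L → ℝ :=
    fun t => dist (x t.1 t.2.2.2) (z t.2.2.1 t.2.2.2)
  have hW : ∀ t, 0 ≤ W t := fun t => mul_nonneg (hT _ _ _) (hα.1 _)
  have hxy : featureCost p x y (fun i j => ∑ k, T i j k) α = ∑ t, W t * dxy t ^ p := by
    simp only [featureCost, Finset.sum_mul]
    simp only [Fintype.sum_prod_type, W, dxy, Finset.mul_sum, mul_assoc]
  have hyz : featureCost p y z (fun j k => ∑ i, T i j k) α = ∑ t, W t * dyz t ^ p := by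
    simp only [featureCost, Finset.sum_mul]
    simp only [Fintype.sum_prod_type, W, dyz, Finset.mul_sum, mul_assoc]
    rw [Finset.sum_comm (s := (Finset.univ : Finset (Fin n)))]
    exact Finset.sum_congr rfl fun j _ => Finset.sum_comm
  have hxz : featureCost p x z (fun i k => ∑ j, T i j k) α = ∑ t, W t * dxz t ^ p := by
    simp only [featureCost, Finset.sum_mul]
    simp only [Fintype.sum_prod_type, W, dxz, Finset.mul_sum, mul_assoc]
    exact Finset.sum_congr rfl fun i _ => Finset.sum_comm
  rw [hxy, hyz, hxz]
  refine le_trans ?_ (weighted_Lp_add_le Finset.univ hp hW (fun _ => dist_nonneg)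
    (fun _ => dist_nonneg))
  refine Real.rpow_le_rpow (Finset.sum_nonneg fun t _ =>
    mul_nonneg (hW t) (Real.rpow_nonneg dist_nonneg _)) ?_ (by positivity)
  exact Finset.sum_le_sum fun t _ => mul_le_mul_of_nonneg_left
    (Real.rpow_le_rpow dist_nonneg (dist_triangle _ _ _) hp0) (hW t)

lemma exists_robustCost_rpow_le_add (hp : 1 ≤ p) {a : Fin n → ℝ} {b : Fin m → ℝ} {c : Fin u → ℝ}
    {Q : Fin m → Fin u → ℝ} (hP : P ∈ transportPolytope a b) (hQ : Q ∈ transportPolytope b c) :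
    ∃ R ∈ transportPolytope a c, robustCost p x z R ^ (1 / p) ≤
      robustCost p x y P ^ (1 / p) + robustCost p y z Q ^ (1 / p) := by
  have hp0 : 0 < p := by positivity
  obtain ⟨T, hT, hTP, hTQ⟩ := exists_gluing hP hQ
  have hR : ∀ i k, 0 ≤ ∑ j, T i j k := fun i k => Finset.sum_nonneg fun j _ => hT i j k
  refine ⟨fun i k => ∑ j, T i j k, ⟨hR, fun i => ?_, fun k => ?_⟩, ?_⟩
  · rw [Finset.sum_comm]
    simp only [hTP, hP.2.1]
  · rw [Finset.sum_comm]
    simp only [hTQ, hQ.2.2]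
  · have hsum : 0 ≤ robustCost p x y P ^ (1 / p) + robustCost p y z Q ^ (1 / p) :=
      add_nonneg (Real.rpow_nonneg (robustCost_nonneg hP.1) _)
        (Real.rpow_nonneg (robustCost_nonneg hQ.1) _)
    rw [one_div, Real.rpow_inv_le_iff_of_pos (robustCost_nonneg hR) (by simpa using hsum) hp0,
      ← one_div]
    refine Real.sSup_le ?_ (Real.rpow_nonneg hsum _)
    rintro _ ⟨α, hα, rfl⟩
    rw [← Real.rpow_inv_le_iff_of_pos (featureCost_nonneg hR hα) hsum hp0, ← one_div]
    have h := featureCost_rpow_le_add (x := x) (y := y) (z := z) hp hα hT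
    simp only [hTP, hTQ] at h
    exact h.trans <| add_le_add
      (Real.rpow_le_rpow (featureCost_nonneg hP.1 hα) (featureCost_le_robustCost hP.1 hα)
        (by positivity))
      (Real.rpow_le_rpow (featureCost_nonneg hQ.1 hα) (featureCost_le_robustCost hQ.1 hα)
        (by positivity))

lemma FRWD_le_robustCost_rpow (hp : 1 ≤ p) {a : Fin n → ℝ} {b : Fin m → ℝ}
    (hP : P ∈ transportPolytope a b) : FRWD p a x b y ≤ robustCost p x y P ^ (1 / p) := by
  have h0 : ∀ v ∈ {v : ℝ | ∃ P ∈ transportPolytope a b, v = robustCost p x y P}, 0 ≤ v := by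
    rintro _ ⟨R, hR, rfl⟩
    exact robustCost_nonneg hR.1
  rw [FRWD_eq_sInf_robustCost]
  exact Real.rpow_le_rpow (Real.sInf_nonneg h0) (csInf_le ⟨0, h0⟩ ⟨P, hP, rfl⟩) (by positivity)

lemma le_FRWD (hp : 1 ≤ p) {a : Fin n → ℝ} {b : Fin m → ℝ} (ha : a ∈ probSimplex n)
    (hb : b ∈ probSimplex m) {t : ℝ}
    (ht : ∀ P ∈ transportPolytope a b, t ≤ robustCost p x y P ^ (1 / p)) :
    t ≤ FRWD p a x b y := by
  obtain ⟨P, hP⟩ := transportPolytope_nonempty ha hb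
  rw [FRWD_eq_sInf_robustCost]
  refine le_rpow_sInf hp ?_ ?_ ?_
  · exact ⟨_, P, hP, rfl⟩
  · rintro _ ⟨R, hR, rfl⟩
    exact robustCost_nonneg hR.1
  · rintro _ ⟨R, hR, rfl⟩
    exact ht R hR

end Cost

/-- triangle inequality for the `p`-feature robust Wasserstein distance. -/
theorem FRWD_triangle (L : ℕ) (hL : 1 ≤ L) (E : Fin L → Type*) [∀ ℓ, MetricSpace (E ℓ)]
    (p : ℝ) (hp : 1 ≤ p) (n m u : ℕ)
    (x : Fin n → ∀ ℓ, E ℓ) (y : Fin m → ∀ ℓ, E ℓ) (z : Fin u → ∀ ℓ, E ℓ)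
    (a : Fin n → ℝ) (b : Fin m → ℝ) (c : Fin u → ℝ)
    (ha : a ∈ probSimplex n) (hb : b ∈ probSimplex m) (hc : c ∈ probSimplex u) :
    FRWD p a x c z ≤ FRWD p a x b y + FRWD p b y c z := by
  refine sub_le_iff_le_add.1 (le_FRWD hp ha hb fun P hP => sub_le_comm.1 ?_)
  refine le_FRWD hp hb hc fun Q hQ => sub_le_iff_le_add'.2 ?_
  obtain ⟨R, hR, hle⟩ := exists_robustCost_rpow_le_add (x := x) (y := y) (z := z) hp hP hQ
  exact (FRWD_le_robustCost_rpow hp hR).trans hle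
end
end

section
/- Identity of indiscernibles: let L ≥ 1 and let (E_ℓ, d_ℓ), ℓ = 1,…,L, be metric spaces, and let p ≥ 1 be real. Let x_1,…,x_n and y_1,…,y_m be points of ∏_ℓ E_ℓ, and let a ∈ Σ^n, b ∈ Σ^m be probability weight vectors. If FRWD_p((a,x),(b,y)) = 0, then the two weighted point configurations define the same discrete measure: for every point z ∈ ∏_ℓ E_ℓ, ∑_{i : x_i = z} a_i = ∑_{j : y_j = z} b_j. -/
open scoped BigOperators

noncomputable section

/-- The cost of a plan at a fixed weight vector is at most its worst-case cost. -/
lemma cost_le_sSup {L n m : ℕ} {E : Fin L → Type*} [∀ ℓ, MetricSpace (E ℓ)] (p : ℝ)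
    (x : Fin n → ∀ ℓ, E ℓ) (y : Fin m → ∀ ℓ, E ℓ) {P : Fin n → Fin m → ℝ}
    (hP : ∀ i j, 0 ≤ P i j) {α : Fin L → ℝ} (hα : α ∈ probSimplex L) :
    ∑ i, ∑ j, P i j * ∑ ℓ, α ℓ * dist (x i ℓ) (y j ℓ) ^ p ≤
      sSup {w : ℝ | ∃ α ∈ probSimplex L,
        w = ∑ i, ∑ j, P i j * ∑ ℓ, α ℓ * dist (x i ℓ) (y j ℓ) ^ p} := by
  refine le_csSup ⟨∑ i, ∑ j, P i j * ∑ ℓ, dist (x i ℓ) (y j ℓ) ^ p, ?_⟩ ⟨α, hα, rfl⟩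
  rintro w ⟨β, hβ, rfl⟩
  refine Finset.sum_le_sum fun i _ => Finset.sum_le_sum fun j _ =>
    mul_le_mul_of_nonneg_left (Finset.sum_le_sum fun ℓ _ => ?_) (hP i j)
  refine mul_le_of_le_one_left (by positivity) ?_
  rw [← hβ.2]
  exact Finset.single_le_sum (fun k _ => hβ.1 k) (Finset.mem_univ ℓ)

/-- The independent coupling of two probability weight vectors is a transport plan. -/
lemma mul_mem_transportPolytope {n m : ℕ} {a : Fin n → ℝ} {b : Fin m → ℝ}
    (ha : a ∈ probSimplex n) (hb : b ∈ probSimplex m) :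
    (fun i j => a i * b j) ∈ transportPolytope a b :=
  ⟨fun i j => mul_nonneg (ha.1 i) (hb.1 j),
    fun i => by rw [← Finset.mul_sum, hb.2, mul_one],
    fun j => by rw [← Finset.sum_mul, ha.2, one_mul]⟩

/-- The uniform weight vector is a probability vector. -/
lemma const_inv_mem_probSimplex {L : ℕ} (hL : 1 ≤ L) :
    (fun _ => (L : ℝ)⁻¹) ∈ probSimplex L := by
  refine ⟨fun _ => by positivity, ?_⟩
  have : (L : ℝ) ≠ 0 := by positivity
  simp [this]

/-- If the robust distance vanishes, some transport plan has arbitrarily small cost at any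
given weight vector. -/
lemma exists_plan_cost_lt_of_FRWD_eq_zero {L n m : ℕ} {E : Fin L → Type*}
    [∀ ℓ, MetricSpace (E ℓ)] {p : ℝ} (hp : 1 ≤ p)
    {a : Fin n → ℝ} {x : Fin n → ∀ ℓ, E ℓ} {b : Fin m → ℝ} {y : Fin m → ∀ ℓ, E ℓ}
    (ha : a ∈ probSimplex n) (hb : b ∈ probSimplex m) (h0 : FRWD p a x b y = 0)
    {α : Fin L → ℝ} (hα : α ∈ probSimplex L) {ε : ℝ} (hε : 0 < ε) :
    ∃ P ∈ transportPolytope a b,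
      ∑ i, ∑ j, P i j * ∑ ℓ, α ℓ * dist (x i ℓ) (y j ℓ) ^ p < ε := by
  unfold FRWD at h0
  rw [Real.rpow_eq_zero _ (by positivity)] at h0
  · obtain ⟨v, ⟨P, hP, rfl⟩, hv⟩ := exists_lt_of_csInf_lt
      (by exact ⟨_, _, mul_mem_transportPolytope ha hb, rfl⟩) (h0.trans_lt hε)
    exact ⟨P, hP, (cost_le_sSup p x y hP.1 hα).trans_lt hv⟩
  · refine Real.sInf_nonneg ?_
    rintro v ⟨P, hP, rfl⟩
    refine Real.sSup_nonneg ?_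
    rintro w ⟨β, hβ, rfl⟩
    exact Finset.sum_nonneg fun i _ => Finset.sum_nonneg fun j _ => mul_nonneg (hP.1 i j)
      (Finset.sum_nonneg fun ℓ _ => mul_nonneg (hβ.1 ℓ) (by positivity))

/-- The mass discrepancy at a point is at most the mass a transport plan moves between
distinct points. -/
lemma abs_mass_sub_le_sum_ne {n m : ℕ} {X : Type*} [DecidableEq X]
    {a : Fin n → ℝ} {b : Fin m → ℝ} (x : Fin n → X) (y : Fin m → X) {P : Fin n → Fin m → ℝ}
    (hP : P ∈ transportPolytope a b) (z : X) :
    |(∑ i, if x i = z then a i else 0) - ∑ j, if y j = z then b j else 0| ≤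
      ∑ i, ∑ j, P i j * if x i = y j then 0 else 1 := by
  obtain ⟨hP0, hPa, hPb⟩ := hP
  have hx : (∑ i, if x i = z then a i else 0) =
      ∑ i, ∑ j, P i j * if x i = z then 1 else 0 := by
    simp_rw [← Finset.sum_mul, hPa, mul_ite, mul_one, mul_zero]
  have hy : (∑ j, if y j = z then b j else 0) =
      ∑ i, ∑ j, P i j * if y j = z then 1 else 0 := by
    rw [Finset.sum_comm]
    simp_rw [← Finset.sum_mul, hPb, mul_ite, mul_one, mul_zero]
  rw [hx, hy, ← Finset.sum_sub_distrib]
  refine (Finset.abs_sum_le_sum_abs _ _).trans (Finset.sum_le_sum fun i _ => ?_)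
  rw [← Finset.sum_sub_distrib]
  refine (Finset.abs_sum_le_sum_abs _ _).trans (Finset.sum_le_sum fun j _ => ?_)
  rw [← mul_sub, abs_mul, abs_of_nonneg (hP0 i j)]
  refine mul_le_mul_of_nonneg_left ?_ (hP0 i j)
  split_ifs <;> simp_all

/-- The uniformly weighted cost of moving between distinct points is positive. -/
lemma sum_inv_mul_dist_rpow_pos {L : ℕ} {E : Fin L → Type*} [∀ ℓ, MetricSpace (E ℓ)]
    (p : ℝ) {u v : ∀ ℓ, E ℓ} (huv : u ≠ v) :
    0 < ∑ ℓ, (L : ℝ)⁻¹ * dist (u ℓ) (v ℓ) ^ p := by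
  obtain ⟨k, hk⟩ := Function.ne_iff.mp huv
  have hL : (0 : ℝ) < L := by exact_mod_cast k.pos
  have hd := dist_pos.mpr hk
  exact Finset.sum_pos' (fun ℓ _ => by positivity) ⟨k, Finset.mem_univ k, by positivity⟩

open Classical in
/-- identity of indiscernibles — if the `p`-feature robust Wasserstein
distance between two weighted point configurations is `0`, then they define the same
discrete measure: for every point `z`, the total weight of the `x_i` equal to `z`
matches the total weight of the `y_j` equal to `z`. -/
theorem FRWD_eq_zero_imp_same_measure (L : ℕ) (hL : 1 ≤ L) (E : Fin L → Type*)
    [∀ ℓ, MetricSpace (E ℓ)] (p : ℝ) (hp : 1 ≤ p) (n m : ℕ)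
    (x : Fin n → ∀ ℓ, E ℓ) (y : Fin m → ∀ ℓ, E ℓ)
    (a : Fin n → ℝ) (b : Fin m → ℝ)
    (ha : a ∈ probSimplex n) (hb : b ∈ probSimplex m)
    (h0 : FRWD p a x b y = 0) :
    ∀ z : (∀ ℓ, E ℓ),
      (∑ i, if x i = z then a i else 0) = ∑ j, if y j = z then b j else 0 := by
  intro z
  set c : Fin n → Fin m → ℝ := fun i j => ∑ ℓ, (L : ℝ)⁻¹ * dist (x i ℓ) (y j ℓ) ^ p with hc
  have hc0 : ∀ i j, 0 ≤ c i j := fun i j => Finset.sum_nonneg fun ℓ _ => by positivity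
  set K : ℝ := ∑ i, ∑ j, (c i j)⁻¹ with hK
  have hK0 : 0 ≤ K :=
    Finset.sum_nonneg fun i _ => Finset.sum_nonneg fun j _ => inv_nonneg.mpr (hc0 i j)
  have hcK : ∀ i j, (if x i = y j then (0 : ℝ) else 1) ≤ K * c i j := by
    intro i j
    split_ifs with hij
    · exact mul_nonneg hK0 (hc0 i j)
    · have hpos : 0 < c i j := sum_inv_mul_dist_rpow_pos p hij
      rw [← inv_le_iff_one_le_mul₀ hpos]
      calc (c i j)⁻¹ ≤ ∑ j, (c i j)⁻¹ :=
            Finset.single_le_sum (f := fun j => (c i j)⁻¹)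
              (fun j _ => inv_nonneg.mpr (hc0 i j)) (Finset.mem_univ j)
        _ ≤ K := Finset.single_le_sum (f := fun i => ∑ j, (c i j)⁻¹)
              (fun i _ => Finset.sum_nonneg fun j _ => inv_nonneg.mpr (hc0 i j))
              (Finset.mem_univ i)
  rw [← sub_eq_zero, ← abs_nonpos_iff]
  refine le_of_forall_pos_le_add fun ε hε => ?_
  have hK1 : 0 < K + 1 := by positivity
  obtain ⟨P, hP, hlt⟩ := exists_plan_cost_lt_of_FRWD_eq_zero hp ha hb h0
    (const_inv_mem_probSimplex hL) (div_pos hε hK1)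
  calc |(∑ i, if x i = z then a i else 0) - ∑ j, if y j = z then b j else 0|
      ≤ ∑ i, ∑ j, P i j * if x i = y j then 0 else 1 := abs_mass_sub_le_sum_ne x y hP z
    _ ≤ ∑ i, ∑ j, P i j * (K * c i j) := Finset.sum_le_sum fun i _ =>
        Finset.sum_le_sum fun j _ => mul_le_mul_of_nonneg_left (hcK i j) (hP.1 i j)
    _ = K * ∑ i, ∑ j, P i j * c i j := by
        simp_rw [Finset.mul_sum, mul_left_comm K]
    _ ≤ K * (ε / (K + 1)) := mul_le_mul_of_nonneg_left hlt.le hK0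
    _ ≤ (K + 1) * (ε / (K + 1)) := by gcongr; linarith
    _ = 0 + ε := by field_simp; ring
end
end

section
/- The softmax function with inverse temperature λ is λ-Lipschitz with respect to the Euclidean norm: let L ≥ 1 and λ > 0, and define σ_λ : ℝ^L → ℝ^L by σ_λ(z)_ℓ = exp(λ z_ℓ) / ∑_{ℓ'=1}^L exp(λ z_{ℓ'}). Then for all z, z' ∈ ℝ^L, ‖σ_λ(z) − σ_λ(z')‖₂ ≤ λ ‖z − z'‖₂, where ‖·‖₂ denotes the Euclidean norm on ℝ^L. -/
open scoped BigOperators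

/-- The norm of the vector `p i * (d i - m)`, where `m` is the mean of `d` under the probability
weights `p`, is at most the norm of `d`. -/
lemma sum_sq_weight_mul_sub_mean_le {ι : Type*} [Fintype ι] (p d : ι → ℝ)
    (hp : ∀ i, 0 ≤ p i) (hsum : ∑ i, p i = 1) :
    ∑ i, (p i * (d i - ∑ j, p j * d j)) ^ 2 ≤ ∑ i, d i ^ 2 := by
  have hp1 : ∀ i, p i ≤ 1 := fun i ↦
    hsum ▸ Finset.single_le_sum (fun j _ ↦ hp j) (Finset.mem_univ i)
  set m := ∑ j, p j * d j with hm
  calc ∑ i, (p i * (d i - m)) ^ 2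
      ≤ ∑ i, p i * (d i - m) ^ 2 := by
        refine Finset.sum_le_sum fun i _ ↦ ?_
        rw [mul_pow]
        exact mul_le_mul_of_nonneg_right (by nlinarith [hp i, hp1 i]) (sq_nonneg _)
    _ = ∑ i, p i * d i ^ 2 - m ^ 2 := by
        have h : ∀ i, p i * (d i - m) ^ 2 = p i * d i ^ 2 - 2 * m * (p i * d i) + m ^ 2 * p i :=
          fun i ↦ by ring
        simp only [h, Finset.sum_add_distrib, Finset.sum_sub_distrib, ← Finset.mul_sum, hsum, ← hm]
        ring
    _ ≤ ∑ i, p i * d i ^ 2 := sub_le_self _ (sq_nonneg m)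
    _ ≤ ∑ i, d i ^ 2 :=
        Finset.sum_le_sum fun i _ ↦ mul_le_of_le_one_left (sq_nonneg _) (hp1 i)

/-- The derivative of a softmax coordinate along the line `t ↦ a + t • d`. -/
lemma hasDerivAt_softmax_line {ι : Type*} [Fintype ι] [Nonempty ι] (lam : ℝ) (a d : ι → ℝ)
    (i : ι) (t : ℝ) :
    HasDerivAt (fun s ↦ Real.exp (lam * (a i + s * d i)) /
        ∑ j, Real.exp (lam * (a j + s * d j)))
      (lam * (Real.exp (lam * (a i + t * d i)) / (∑ j, Real.exp (lam * (a j + t * d j))) *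
        (d i - ∑ k, Real.exp (lam * (a k + t * d k)) /
          (∑ j, Real.exp (lam * (a j + t * d j))) * d k))) t := by
  have he : ∀ j, HasDerivAt (fun s ↦ Real.exp (lam * (a j + s * d j)))
      (Real.exp (lam * (a j + t * d j)) * (lam * d j)) t := fun j ↦ by
    simpa using ((((hasDerivAt_id t).mul_const (d j)).const_add (a j)).const_mul lam).exp
  have hS : 0 < ∑ j, Real.exp (lam * (a j + t * d j)) :=
    Finset.sum_pos (fun _ _ ↦ Real.exp_pos _) Finset.univ_nonempty
  refine ((he i).fun_div (HasDerivAt.fun_sum fun j _ ↦ he j) hS.ne').congr_deriv ?_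
  have h₁ : ∑ j, Real.exp (lam * (a j + t * d j)) * (lam * d j) =
      lam * ∑ j, Real.exp (lam * (a j + t * d j)) * d j := by
    rw [Finset.mul_sum]
    exact Finset.sum_congr rfl fun j _ ↦ by ring
  have h₂ : ∑ k, Real.exp (lam * (a k + t * d k)) /
      (∑ j, Real.exp (lam * (a j + t * d j))) * d k =
      (∑ k, Real.exp (lam * (a k + t * d k)) * d k) /
        ∑ j, Real.exp (lam * (a j + t * d j)) := by
    rw [Finset.sum_div]
    exact Finset.sum_congr rfl fun k _ ↦ by ring
  rw [h₁, h₂]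
  field_simp

/-- the softmax function with inverse temperature `λ > 0` is
`λ`-Lipschitz with respect to the Euclidean norm on `ℝ^L`. -/
theorem softmax_lipschitz (L : ℕ) (hL : 1 ≤ L) (lam : ℝ) (hlam : 0 < lam)
    (σ : EuclideanSpace ℝ (Fin L) → EuclideanSpace ℝ (Fin L))
    (hσ : ∀ (z : EuclideanSpace ℝ (Fin L)) (ℓ : Fin L),
      σ z ℓ = Real.exp (lam * z ℓ) / ∑ ℓ' : Fin L, Real.exp (lam * z ℓ')) :
    ∀ z z' : EuclideanSpace ℝ (Fin L), ‖σ z - σ z'‖ ≤ lam * ‖z - z'‖ := by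
  intro z z'
  have : Nonempty (Fin L) := ⟨⟨0, hL⟩⟩
  set d := z - z' with hd
  let p : ℝ → Fin L → ℝ := fun t i ↦
    Real.exp (lam * (z' i + t * d i)) / ∑ j, Real.exp (lam * (z' j + t * d j))
  let f' : ℝ → EuclideanSpace ℝ (Fin L) := fun t ↦
    lam • WithLp.toLp 2 fun i ↦ p t i * (d i - ∑ k, p t k * d k)
  have hderiv : ∀ t, HasDerivAt (fun s : ℝ ↦ σ (z' + s • d)) (f' t) t := fun t ↦ by
    rw [hasDerivAt_iff_hasFDerivAt, ← hasFDerivWithinAt_univ, hasFDerivWithinAt_euclidean]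
    intro i
    rw [hasFDerivWithinAt_univ]
    simp only [hσ, PiLp.add_apply, PiLp.smul_apply, smul_eq_mul]
    refine (hasDerivAt_softmax_line lam z' d i t).hasFDerivAt.congr_fderiv ?_
    ext
    simp [f', p]
  have hbound : ∀ t, ‖f' t‖ ≤ lam * ‖d‖ := fun t ↦ by
    have hS : 0 < ∑ j, Real.exp (lam * (z' j + t * d j)) :=
      Finset.sum_pos (fun _ _ ↦ Real.exp_pos _) Finset.univ_nonempty
    rw [norm_smul, Real.norm_of_nonneg hlam.le]
    refine mul_le_mul_of_nonneg_left ?_ hlam.le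
    rw [EuclideanSpace.norm_eq, EuclideanSpace.norm_eq]
    refine Real.sqrt_le_sqrt ?_
    simp only [Real.norm_eq_abs, sq_abs]
    refine sum_sq_weight_mul_sub_mean_le (p t) d
      (fun i ↦ div_nonneg (Real.exp_pos _).le hS.le) ?_
    rw [← Finset.sum_div, div_self hS.ne']
  simpa [hd] using norm_image_sub_le_of_norm_deriv_le_segment_01'
    (fun t _ ↦ (hderiv t).hasDerivWithinAt) (fun t _ ↦ hbound t)
end

section
/- Lipschitz continuity of the gradient of G_η: let n, m, L ≥ 1, η > 0 and C_1, …, C_L ∈ ℝ^{n×m}. Let Φ : ℝ^L → ℝ^{n×m} be the linear map α ↦ ∑_{ℓ=1}^L α_ℓ C_ℓ, and let ‖Φ‖_op denote its operator norm with the Euclidean norm on ℝ^L and the Frobenius norm on ℝ^{n×m}. Then for all Π, Π' ∈ ℝ^{n×m}, ‖M_Π − M_{Π'}‖_F ≤ (1/η) ‖Φ‖_op² ‖Π − Π'‖_F, where M_Π = ∑_ℓ α_ℓ(Π) C_ℓ with α_ℓ(Π) = exp(⟨Π,C_ℓ⟩/η)/∑_{ℓ'} exp(⟨Π,C_{ℓ'}⟩/η)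 and ‖·‖_F is the Frobenius norm. -/
open scoped BigOperators

/-- On `(0, 1]` the logarithm increases at least as fast as the identity. -/
lemma sq_sub_le_sub_mul_log_sub_log {p q : ℝ} (hp : 0 < p) (hp1 : p ≤ 1) (hq : 0 < q)
    (hq1 : q ≤ 1) : (p - q) ^ 2 ≤ (p - q) * (Real.log p - Real.log q) := by
  wlog h : q ≤ p generalizing p q
  · have := this hq hq1 hp hp1 (le_of_not_ge h)
    linarith
  have hlog : Real.log q - Real.log p ≤ q / p - 1 := by
    rw [← Real.log_div hq.ne' hp.ne']
    exact Real.log_le_sub_one_of_pos (div_pos hq hp)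
  have hdiv : p - q ≤ 1 - q / p := by
    rw [one_sub_div hp.ne']
    exact le_div_self (sub_nonneg.2 h) hp hp1
  rw [sq]
  exact mul_le_mul_of_nonneg_left (by linarith) (sub_nonneg.2 h)

/-- The softmax map is cocoercive with constant `1` for the Euclidean inner product. -/
lemma sum_sq_softmax_sub_le {ι : Type*} [Fintype ι] [Nonempty ι] (x y : ι → ℝ) :
    ∑ i, (Real.exp (x i) / ∑ k, Real.exp (x k) - Real.exp (y i) / ∑ k, Real.exp (y k)) ^ 2 ≤
      ∑ i, (Real.exp (x i) / ∑ k, Real.exp (x k) - Real.exp (y i) / ∑ k, Real.exp (y k)) *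
        (x i - y i) := by
  have hpos : ∀ z : ι → ℝ, 0 < ∑ k, Real.exp (z k) := fun z =>
    Finset.sum_pos (fun k _ => Real.exp_pos _) Finset.univ_nonempty
  have hle : ∀ (z : ι → ℝ) (i : ι), Real.exp (z i) / ∑ k, Real.exp (z k) ≤ 1 := fun z i =>
    div_le_one_of_le₀ (Finset.single_le_sum (f := fun k => Real.exp (z k))
      (fun k _ => (Real.exp_pos _).le) (Finset.mem_univ i)) (hpos z).le
  have hlog : ∀ (z : ι → ℝ) (i : ι), Real.log (Real.exp (z i) / ∑ k, Real.exp (z k)) =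
      z i - Real.log (∑ k, Real.exp (z k)) := fun z i => by
    rw [Real.log_div (Real.exp_pos _).ne' (hpos z).ne', Real.log_exp]
  have hsum : ∀ z : ι → ℝ, ∑ i, Real.exp (z i) / ∑ k, Real.exp (z k) = 1 := fun z => by
    rw [← Finset.sum_div, div_self (hpos z).ne']
  calc
    _ ≤ ∑ i, (Real.exp (x i) / ∑ k, Real.exp (x k) - Real.exp (y i) / ∑ k, Real.exp (y k)) *
        (Real.log (Real.exp (x i) / ∑ k, Real.exp (x k)) -
          Real.log (Real.exp (y i) / ∑ k, Real.exp (y k))) :=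
      Finset.sum_le_sum fun i _ => sq_sub_le_sub_mul_log_sub_log
        (div_pos (Real.exp_pos _) (hpos x)) (hle x i) (div_pos (Real.exp_pos _) (hpos y)) (hle y i)
    _ = ∑ i, (Real.exp (x i) / ∑ k, Real.exp (x k) - Real.exp (y i) / ∑ k, Real.exp (y k)) *
          (x i - y i) -
        (∑ i, Real.exp (x i) / ∑ k, Real.exp (x k) -
          ∑ i, Real.exp (y i) / ∑ k, Real.exp (y k)) *
          (Real.log (∑ k, Real.exp (x k)) - Real.log (∑ k, Real.exp (y k))) := by
      rw [← Finset.sum_sub_distrib, Finset.sum_mul, ← Finset.sum_sub_distrib]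
      refine Finset.sum_congr rfl fun i _ => ?_
      rw [hlog, hlog]
      ring
    _ = _ := by rw [hsum, hsum, sub_self, zero_mul, sub_zero]

/-- Lipschitz continuity of the gradient of `G_η` — for the gradient
map `M_Π = ∑_ℓ α_ℓ(Π) C_ℓ` with softmax weights `α(Π)`, and `Φ : α ↦ ∑_ℓ α_ℓ C_ℓ`
(Euclidean norm on `ℝ^L`, Frobenius norm on matrices), one has
`‖M_Π − M_{Π'}‖_F ≤ (1/η) ‖Φ‖_op² ‖Π − Π'‖_F`. -/
theorem frot_gradient_lipschitz (n m L : ℕ) (hL : 1 ≤ L) (η : ℝ) (hη : 0 < η)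
    (C : Fin L → Fin n → Fin m → ℝ)
    (Φ : EuclideanSpace ℝ (Fin L) →L[ℝ] EuclideanSpace ℝ (Fin n × Fin m))
    (hΦ : ∀ (α : EuclideanSpace ℝ (Fin L)) (q : Fin n × Fin m),
      Φ α q = ∑ ℓ, α ℓ * C ℓ q.1 q.2)
    (M : (Fin n → Fin m → ℝ) → Fin n → Fin m → ℝ)
    (hM : ∀ (P : Fin n → Fin m → ℝ) (i : Fin n) (j : Fin m),
      M P i j = ∑ ℓ, (Real.exp ((∑ i', ∑ j', P i' j' * C ℓ i' j') / η) /
        ∑ ℓ' : Fin L, Real.exp ((∑ i', ∑ j', P i' j' * C ℓ' i' j') / η)) * C ℓ i j)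
    (P P' : Fin n → Fin m → ℝ) :
    Real.sqrt (∑ i, ∑ j, (M P i j - M P' i j) ^ 2) ≤
      (1 / η) * ‖Φ‖ ^ 2 * Real.sqrt (∑ i, ∑ j, (P i j - P' i j) ^ 2) := by
  have : Nonempty (Fin L) := ⟨⟨0, hL⟩⟩
  let x : (Fin n → Fin m → ℝ) → Fin L → ℝ := fun Q ℓ => (∑ i, ∑ j, Q i j * C ℓ i j) / η
  let w : EuclideanSpace ℝ (Fin L) := WithLp.toLp 2 fun ℓ =>
    Real.exp (x P ℓ) / ∑ k, Real.exp (x P k) - Real.exp (x P' ℓ) / ∑ k, Real.exp (x P' k)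
  let D : EuclideanSpace ℝ (Fin n × Fin m) := WithLp.toLp 2 fun q => P q.1 q.2 - P' q.1 q.2
  have hD : Real.sqrt (∑ i, ∑ j, (P i j - P' i j) ^ 2) = ‖D‖ := by
    simp [EuclideanSpace.norm_eq, D, Fintype.sum_prod_type]
  have hΦw : ∀ i j, Φ w (i, j) = M P i j - M P' i j := fun i j => by
    rw [hΦ, hM, hM, ← Finset.sum_sub_distrib]
    exact Finset.sum_congr rfl fun ℓ _ => sub_mul _ _ _
  have hMw : Real.sqrt (∑ i, ∑ j, (M P i j - M P' i j) ^ 2) = ‖Φ w‖ := by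
    simp [EuclideanSpace.norm_eq, Fintype.sum_prod_type, hΦw]
  have hinner : ∑ ℓ, w ℓ * (x P ℓ - x P' ℓ) = inner ℝ (Φ w) D / η := by
    simp only [PiLp.inner_apply, hΦ, RCLike.inner_apply, conj_trivial, Finset.mul_sum]
    rw [Finset.sum_comm, Finset.sum_div]
    refine Finset.sum_congr rfl fun ℓ _ => ?_
    simp only [x, D, ← sub_div, ← Finset.sum_sub_distrib, Fintype.sum_prod_type, Finset.sum_div,
      Finset.mul_sum]
    refine Finset.sum_congr rfl fun i _ => Finset.sum_congr rfl fun j _ => ?_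
    ring
  have hw : ‖w‖ ^ 2 ≤ ‖Φ w‖ * ‖D‖ / η := by
    rw [EuclideanSpace.real_norm_sq_eq]
    calc
      _ ≤ ∑ ℓ, w ℓ * (x P ℓ - x P' ℓ) := sum_sq_softmax_sub_le (x P) (x P')
      _ = inner ℝ (Φ w) D / η := hinner
      _ ≤ _ := div_le_div_of_nonneg_right (real_inner_le_norm _ _) hη.le
  rw [hMw, hD]
  rcases (norm_nonneg (Φ w)).eq_or_lt with h0 | h0
  · rw [← h0]
    positivity
  refine le_of_mul_le_mul_left ?_ h0
  calc
    ‖Φ w‖ * ‖Φ w‖ ≤ (‖Φ‖ * ‖w‖) * (‖Φ‖ * ‖w‖) := by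
      gcongr <;> exact Φ.le_opNorm w
    _ = ‖Φ‖ ^ 2 * ‖w‖ ^ 2 := by ring
    _ ≤ ‖Φ‖ ^ 2 * (‖Φ w‖ * ‖D‖ / η) := by gcongr
    _ = ‖Φ w‖ * (1 / η * ‖Φ‖ ^ 2 * ‖D‖) := by ring
end

section
/- Convergence of the Frank–Wolfe algorithm for FROT: let n, m, L ≥ 1, η > 0, δ ≥ 0, and C_1,…,C_L ∈ ℝ^{n×m}. Let a ∈ Σ^n, b ∈ Σ^m be probability weight vectors and let U(a,b) be the transport polytope. Let Φ : ℝ^L → ℝ^{n×m} be the linear map α ↦ ∑_ℓ α_ℓ C_ℓ with operator norm ‖Φ‖_op (Euclidean norm on ℝ^L, Frobenius norm on ℝ^{n×m}), and set Q = 2‖Φ‖_op²/η. Suppose (Π^{(t)})_{t≥0} is a sequence with Π^{(0)} ∈ U(a,b) such that for each t ≥ 0, with γ_t = 2/(t+2), there exists Π̂^{(t)} ∈ U(a,b) satisfying ⟨Π̂^{(t)}, M_{Π^{(t)}}⟩ ≤ ⟨S, M_{Π^{(t)}}⟩ + δ γ_t Q / 2 for all S ∈ U(a,b), and Π^{(t+1)}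 = (1−γ_t) Π^{(t)} + γ_t Π̂^{(t)}. Then for every t ≥ 1 and every Π* ∈ U(a,b), G_η(Π^{(t)}) − G_η(Π*) ≤ (4 ‖Φ‖_op² / (η (t+2))) (1+δ). -/
open scoped BigOperators

open MeasureTheory ProbabilityTheory in
/-- Hoeffding's lemma for a finitely supported distribution `p`. -/
theorem sum_mul_exp_le_of_abs_le {ι : Type*} [Fintype ι] (p u : ι → ℝ) (c : ℝ)
    (hp : ∀ l, 0 ≤ p l) (hp1 : ∑ l, p l = 1) (hu : ∀ l, |u l| ≤ c) :
    ∑ l, p l * Real.exp (u l) ≤ Real.exp (∑ l, p l * u l + c ^ 2 / 2) := by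
  let _ : MeasurableSpace ι := ⊤
  let q : PMF ι := PMF.ofFintype (fun l => ENNReal.ofReal (p l)) (by
    rw [← ENNReal.ofReal_sum_of_nonneg fun l _ => hp l, hp1, ENNReal.ofReal_one])
  have hq (f : ι → ℝ) : ∫ l, f l ∂q.toMeasure = ∑ l, p l * f l := by
    simp [PMF.integral_eq_sum, q, hp]
  have hsub := (hasSubgaussianMGF_of_mem_Icc (μ := q.toMeasure) (X := u) (a := -c) (b := c)
    (measurable_from_top.aemeasurable) (ae_of_all _ fun l => abs_le.mp (hu l))).mgf_le 1
  have hc : ((((‖c - -c‖₊ / 2) ^ 2 : NNReal)) : ℝ) = c ^ 2 := by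
    push_cast
    rw [Real.norm_eq_abs, div_pow, sq_abs]
    ring
  rw [mgf, hq, hc, hq] at hsub
  calc ∑ l, p l * Real.exp (u l)
      = Real.exp (∑ l, p l * u l) * ∑ l, p l * Real.exp (1 * (u l - ∑ k, p k * u k)) := by
        rw [Finset.mul_sum]
        refine Finset.sum_congr rfl fun l _ => ?_
        rw [mul_left_comm, ← Real.exp_add]
        ring_nf
    _ ≤ Real.exp (∑ l, p l * u l) * Real.exp (c ^ 2 * 1 ^ 2 / 2) := by gcongr
    _ = Real.exp (∑ l, p l * u l + c ^ 2 / 2) := by rw [← Real.exp_add]; ring_nf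

/-- The log-sum-exp function. -/
noncomputable def logSumExp {ι : Type*} [Fintype ι] (z : ι → ℝ) : ℝ :=
  Real.log (∑ l, Real.exp (z l))

/-- The softmax weights, the gradient of `logSumExp`. -/
noncomputable def softmaxWeight {ι : Type*} [Fintype ι] (z : ι → ℝ) (l : ι) : ℝ :=
  Real.exp (z l) / ∑ k, Real.exp (z k)

section LogSumExp

variable {ι : Type*} [Fintype ι]

theorem softmaxWeight_nonneg (z : ι → ℝ) (l : ι) : 0 ≤ softmaxWeight z l := by
  unfold softmaxWeight; positivity

variable [Nonempty ι]

theorem sum_exp_pos (z : ι → ℝ) : 0 < ∑ l, Real.exp (z l) :=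
  Finset.sum_pos (fun _ _ => Real.exp_pos _) Finset.univ_nonempty

theorem sum_softmaxWeight (z : ι → ℝ) : ∑ l, softmaxWeight z l = 1 := by
  simp only [softmaxWeight]
  rw [← Finset.sum_div, div_self (sum_exp_pos z).ne']

theorem logSumExp_sub (z w : ι → ℝ) :
    logSumExp w - logSumExp z =
      Real.log (∑ l, softmaxWeight z l * Real.exp (w l - z l)) := by
  rw [logSumExp, logSumExp, ← Real.log_div (sum_exp_pos w).ne' (sum_exp_pos z).ne',
    Finset.sum_div]
  congr 1
  refine Finset.sum_congr rfl fun l _ => ?_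
  rw [softmaxWeight, div_mul_eq_mul_div, ← Real.exp_add, add_sub_cancel]

theorem sum_softmaxWeight_mul_exp_pos (z u : ι → ℝ) :
    0 < ∑ l, softmaxWeight z l * Real.exp (u l) :=
  Finset.sum_pos (fun _ _ => mul_pos (div_pos (Real.exp_pos _) (sum_exp_pos z)) (Real.exp_pos _))
    Finset.univ_nonempty

/-- The gradient inequality for the convex function `logSumExp`. -/
theorem le_logSumExp_sub (z w : ι → ℝ) :
    ∑ l, softmaxWeight z l * (w l - z l) ≤ logSumExp w - logSumExp z := by
  rw [logSumExp_sub, Real.le_log_iff_exp_le (sum_softmaxWeight_mul_exp_pos z _)]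
  simpa using convexOn_exp.map_sum_le (t := Finset.univ) (w := softmaxWeight z)
    (p := fun l => w l - z l) (fun l _ => softmaxWeight_nonneg z l) (sum_softmaxWeight z)
    (fun _ _ => Set.mem_univ _)

/-- `logSumExp` is smooth with respect to the supremum norm. -/
theorem logSumExp_sub_le (z w : ι → ℝ) (c : ℝ) (h : ∀ l, |w l - z l| ≤ c) :
    logSumExp w - logSumExp z ≤ ∑ l, softmaxWeight z l * (w l - z l) + c ^ 2 / 2 := by
  rw [logSumExp_sub, Real.log_le_iff_le_exp (sum_softmaxWeight_mul_exp_pos z _)]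
  exact sum_mul_exp_le_of_abs_le _ _ c (softmaxWeight_nonneg z) (sum_softmaxWeight z) h

end LogSumExp

/-- The Frobenius inner product. -/
def frobeniusInner {n m : ℕ} (A B : Fin n → Fin m → ℝ) : ℝ :=
  ∑ i, ∑ j, A i j * B i j

theorem frobeniusInner_combo_left {n m : ℕ} (x y : ℝ) (A B D : Fin n → Fin m → ℝ) :
    frobeniusInner (fun i j => x * A i j + y * B i j) D =
      x * frobeniusInner A D + y * frobeniusInner B D := by
  simp only [frobeniusInner, Finset.mul_sum, ← Finset.sum_add_distrib]
  refine Finset.sum_congr rfl fun i _ => Finset.sum_congr rfl fun j _ => ?_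
  ring

theorem frobeniusInner_sum_right {n m : ℕ} {ι : Type*} [Fintype ι] (A : Fin n → Fin m → ℝ)
    (w : ι → ℝ) (C : ι → Fin n → Fin m → ℝ) :
    frobeniusInner A (fun i j => ∑ l, w l * C l i j) = ∑ l, w l * frobeniusInner A (C l) := by
  simp only [frobeniusInner, Finset.mul_sum]
  rw [Finset.sum_comm]
  simp_rw [fun j => Finset.sum_comm (s := Finset.univ) (t := Finset.univ)
    (f := fun (i : Fin n) (l : ι) => A i j * (w l * C l i j))]
  rw [Finset.sum_comm]
  refine Finset.sum_congr rfl fun l _ => ?_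
  rw [Finset.sum_comm]
  refine Finset.sum_congr rfl fun i _ => Finset.sum_congr rfl fun j _ => ?_
  ring

theorem convex_transportPolytope {n m : ℕ} (a : Fin n → ℝ) (b : Fin m → ℝ) :
    Convex ℝ (transportPolytope a b) := by
  rintro P ⟨hP, hPa, hPb⟩ S ⟨hS, hSa, hSb⟩ x y hx hy hxy
  refine ⟨fun i j => ?_, fun i => ?_, fun j => ?_⟩
  · have := hP i j
    have := hS i j
    simp only [Pi.add_apply, Pi.smul_apply, smul_eq_mul]
    positivity
  · simp [Finset.sum_add_distrib, ← Finset.mul_sum, hPa, hSa, ← add_mul, hxy]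
  · simp [Finset.sum_add_distrib, ← Finset.mul_sum, hPb, hSb, ← add_mul, hxy]

/-- The Frobenius diameter of the transport polytope is at most `√2`. -/
theorem sum_sq_sub_le_two {n m : ℕ} {a : Fin n → ℝ} {b : Fin m → ℝ} (ha : ∑ i, a i = 1)
    {P S : Fin n → Fin m → ℝ} (hP : P ∈ transportPolytope a b)
    (hS : S ∈ transportPolytope a b) : ∑ i, ∑ j, (S i j - P i j) ^ 2 ≤ 2 := by
  have total {R : Fin n → Fin m → ℝ} (hR : R ∈ transportPolytope a b) :
      ∑ i, ∑ j, R i j = 1 := by simp [hR.2.1, ha]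
  have le_one {R : Fin n → Fin m → ℝ} (hR : R ∈ transportPolytope a b) (i : Fin n)
      (j : Fin m) : R i j ≤ 1 := by
    rw [← total hR]
    exact (Finset.single_le_sum (fun k _ => hR.1 i k) (Finset.mem_univ j)).trans
      (Finset.single_le_sum (f := fun k => ∑ j, R k j)
        (fun k _ => Finset.sum_nonneg fun j _ => hR.1 k j) (Finset.mem_univ i))
  calc ∑ i, ∑ j, (S i j - P i j) ^ 2 ≤ ∑ i, ∑ j, (S i j + P i j) := by
        gcongr with i _ j _
        nlinarith [hP.1 i j, hS.1 i j, le_one hP i j, le_one hS i j,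
          mul_nonneg (hP.1 i j) (hS.1 i j)]
    _ = 2 := by
        simp only [Finset.sum_add_distrib]
        rw [total hS, total hP]
        norm_num

/-- Each `⟨D, C ℓ⟩` is at most `‖Φ‖ ‖D‖` for the map `Φ` with columns `C ℓ`. -/
theorem abs_frobeniusInner_le {n m L : ℕ} (C : Fin L → Fin n → Fin m → ℝ)
    (Φ : EuclideanSpace ℝ (Fin L) →L[ℝ] EuclideanSpace ℝ (Fin n × Fin m))
    (hΦ : ∀ (α : EuclideanSpace ℝ (Fin L)) (q : Fin n × Fin m),
      Φ α q = ∑ ℓ, α ℓ * C ℓ q.1 q.2)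
    (D : Fin n → Fin m → ℝ) (l : Fin L) :
    |frobeniusInner D (C l)| ≤ ‖Φ‖ * √(∑ i, ∑ j, D i j ^ 2) := by
  let e : EuclideanSpace ℝ (Fin L) := EuclideanSpace.single l 1
  let d : EuclideanSpace ℝ (Fin n × Fin m) := WithLp.toLp 2 fun q => D q.1 q.2
  have hinner : inner ℝ (Φ e) d = frobeniusInner D (C l) := by
    simp [PiLp.inner_apply, hΦ, e, d, frobeniusInner, Fintype.sum_prod_type]
  have hd : ‖d‖ = √(∑ i, ∑ j, D i j ^ 2) := by
    simp [EuclideanSpace.norm_eq, d, Fintype.sum_prod_type]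
  have he : ‖Φ e‖ ≤ ‖Φ‖ := by simpa [e] using Φ.le_opNorm e
  rw [← hinner, ← hd]
  exact (abs_real_inner_le_norm _ _).trans (by gcongr)

/-- The step-size recursion of the Frank–Wolfe method gives an `O(1/t)` rate. -/
theorem frankWolfe_rate (h : ℕ → ℝ) (K : ℝ) (hK : 0 ≤ K)
    (hrec : ∀ t : ℕ, h (t + 1) ≤
      (1 - 2 / ((t : ℝ) + 2)) * h t + (2 / ((t : ℝ) + 2)) ^ 2 * K) :
    ∀ t : ℕ, 1 ≤ t → h t ≤ 4 * K / ((t : ℝ) + 2) := by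
  intro t ht
  induction t, ht using Nat.le_induction with
  | base =>
    have := hrec 0
    norm_num at this ⊢
    linarith
  | succ t ht ih =>
    have h1 : (0 : ℝ) ≤ 1 - 2 / ((t : ℝ) + 2) := by
      rw [sub_nonneg, div_le_one (by positivity)]
      linarith [(Nat.cast_nonneg t : (0 : ℝ) ≤ t)]
    calc h (t + 1) ≤ (1 - 2 / ((t : ℝ) + 2)) * h t + (2 / ((t : ℝ) + 2)) ^ 2 * K := hrec t
      _ ≤ (1 - 2 / ((t : ℝ) + 2)) * (4 * K / ((t : ℝ) + 2)) + (2 / ((t : ℝ) + 2)) ^ 2 * K := by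
        gcongr
      _ = 4 * K * (((t : ℝ) + 1) / ((t : ℝ) + 2) ^ 2) := by field_simp; ring
      _ ≤ 4 * K * (1 / (((t + 1 : ℕ) : ℝ) + 2)) := by
        refine mul_le_mul_of_nonneg_left ?_ (by positivity)
        rw [div_le_div_iff₀ (by positivity) (by positivity)]
        push_cast
        nlinarith
      _ = 4 * K / (((t + 1 : ℕ) : ℝ) + 2) := by ring

/-- convergence of the Frank–Wolfe algorithm for the smoothed FROT
objective `G_η(Π) = η log(∑_ℓ exp(⟨Π, C_ℓ⟩/η))`: if the linear subproblems are solved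
to accuracy `δ γ_t Q / 2` with `Q = 2‖Φ‖_op²/η` and step sizes `γ_t = 2/(t+2)`, then
`G_η(Π⁽ᵗ⁾) − G_η(Π*) ≤ (4‖Φ‖_op²/(η(t+2)))(1+δ)` for all `t ≥ 1` and `Π* ∈ U(a,b)`. -/
theorem frot_frank_wolfe_convergence (n m L : ℕ) (hn : 1 ≤ n) (hm : 1 ≤ m) (hL : 1 ≤ L)
    (η δ : ℝ) (hη : 0 < η) (hδ : 0 ≤ δ)
    (C : Fin L → Fin n → Fin m → ℝ)
    (a : Fin n → ℝ) (b : Fin m → ℝ)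
    (ha : (∀ i, 0 ≤ a i) ∧ ∑ i, a i = 1) (hb : (∀ j, 0 ≤ b j) ∧ ∑ j, b j = 1)
    (Φ : EuclideanSpace ℝ (Fin L) →L[ℝ] EuclideanSpace ℝ (Fin n × Fin m))
    (hΦ : ∀ (α : EuclideanSpace ℝ (Fin L)) (q : Fin n × Fin m),
      Φ α q = ∑ ℓ, α ℓ * C ℓ q.1 q.2)
    (G : (Fin n → Fin m → ℝ) → ℝ)
    (hG : ∀ P : Fin n → Fin m → ℝ,
      G P = η * Real.log (∑ ℓ, Real.exp ((∑ i, ∑ j, P i j * C ℓ i j) / η)))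
    (M : (Fin n → Fin m → ℝ) → Fin n → Fin m → ℝ)
    (hM : ∀ (P : Fin n → Fin m → ℝ) (i : Fin n) (j : Fin m),
      M P i j = ∑ ℓ, (Real.exp ((∑ i', ∑ j', P i' j' * C ℓ i' j') / η) /
        ∑ ℓ' : Fin L, Real.exp ((∑ i', ∑ j', P i' j' * C ℓ' i' j') / η)) * C ℓ i j)
    (Pseq Phat : ℕ → Fin n → Fin m → ℝ)
    (hP0 : Pseq 0 ∈ transportPolytope a b)
    (hhat : ∀ t : ℕ, Phat t ∈ transportPolytope a b ∧
      ∀ S ∈ transportPolytope a b,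
        ∑ i, ∑ j, Phat t i j * M (Pseq t) i j ≤
          (∑ i, ∑ j, S i j * M (Pseq t) i j) +
            δ * (2 / ((t : ℝ) + 2)) * (2 * ‖Φ‖ ^ 2 / η) / 2)
    (hstep : ∀ t : ℕ, Pseq (t + 1) = fun i j =>
      (1 - 2 / ((t : ℝ) + 2)) * Pseq t i j + (2 / ((t : ℝ) + 2)) * Phat t i j) :
    ∀ t : ℕ, 1 ≤ t → ∀ Pstar ∈ transportPolytope a b,
      G (Pseq t) - G Pstar ≤ 4 * ‖Φ‖ ^ 2 / (η * ((t : ℝ) + 2)) * (1 + δ) := by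
  have : Nonempty (Fin L) := ⟨⟨0, hL⟩⟩
  let z : (Fin n → Fin m → ℝ) → Fin L → ℝ := fun P l => frobeniusInner P (C l) / η
  have hGz (P) : G P = η * logSumExp (z P) := hG P
  have hMz (P S) : ∑ i, ∑ j, S i j * M P i j = η * ∑ l, softmaxWeight (z P) l * z S l := by
    have hMP : M P = fun i j => ∑ l, softmaxWeight (z P) l * C l i j := by
      ext i j
      exact hM P i j
    change frobeniusInner S (M P) = _
    rw [hMP, frobeniusInner_sum_right, Finset.mul_sum]
    refine Finset.sum_congr rfl fun l _ => ?_
    simp only [z]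
    field_simp
  have hγ (t : ℕ) : 0 ≤ 2 / ((t : ℝ) + 2) ∧ 2 / ((t : ℝ) + 2) ≤ 1 :=
    ⟨by positivity, by
      rw [div_le_one (by positivity)]
      linarith [(Nat.cast_nonneg t : (0 : ℝ) ≤ t)]⟩
  have hmem (t : ℕ) : Pseq t ∈ transportPolytope a b := by
    induction t with
    | zero => exact hP0
    | succ t ih =>
      rw [hstep t]
      exact convex_transportPolytope a b ih (hhat t).1 (sub_nonneg.mpr (hγ t).2) (hγ t).1
        (sub_add_cancel _ _)
  intro t ht Pstar hstar
  have hrec (t : ℕ) : G (Pseq (t + 1)) - G Pstar ≤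
      (1 - 2 / ((t : ℝ) + 2)) * (G (Pseq t) - G Pstar) +
        (2 / ((t : ℝ) + 2)) ^ 2 * (‖Φ‖ ^ 2 / η * (1 + δ)) := by
    obtain ⟨hγ0, -⟩ := hγ t
    have hlin := (hhat t).2 Pstar hstar
    have hst := hstep t
    generalize 2 / ((t : ℝ) + 2) = γ at *
    have hdiff (l : Fin L) :
        z (Pseq (t + 1)) l - z (Pseq t) l = γ * (z (Phat t) l - z (Pseq t) l) := by
      simp only [z, hst, frobeniusInner_combo_left]
      ring
    have hbound (l : Fin L) :
        |z (Pseq (t + 1)) l - z (Pseq t) l| ≤ γ * (‖Φ‖ * √2 / η) := by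
      have hsub : z (Phat t) l - z (Pseq t) l =
          frobeniusInner (fun i j => 1 * Phat t i j + (-1) * Pseq t i j) (C l) / η := by
        rw [frobeniusInner_combo_left]
        simp only [z]
        ring
      rw [hdiff, abs_mul, abs_of_nonneg hγ0, hsub, abs_div, abs_of_pos hη]
      gcongr
      refine (abs_frobeniusInner_le C Φ hΦ _ l).trans ?_
      gcongr
      simpa [← sub_eq_add_neg] using sum_sq_sub_le_two ha.2 (hmem t) (hhat t).1
    have hsmooth := logSumExp_sub_le _ _ _ hbound
    have hconv := le_logSumExp_sub (z (Pseq t)) (z Pstar)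
    simp_rw [hdiff, mul_left_comm _ γ, ← Finset.mul_sum] at hsmooth
    simp only [mul_sub, Finset.sum_sub_distrib] at hsmooth hconv
    rw [hMz, hMz] at hlin
    rw [hGz, hGz, hGz]
    have hsq : (γ * (‖Φ‖ * √2 / η)) ^ 2 / 2 = γ ^ 2 * (‖Φ‖ ^ 2 / η) / η := by
      rw [mul_pow, div_pow, mul_pow, Real.sq_sqrt (by norm_num)]
      field_simp
    rw [hsq] at hsmooth
    have h1 := mul_le_mul_of_nonneg_left hsmooth hη.le
    have h2 := mul_le_mul_of_nonneg_left hconv (mul_nonneg hη.le hγ0)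
    have h3 := mul_le_mul_of_nonneg_left hlin hγ0
    have h4 : η * (γ ^ 2 * (‖Φ‖ ^ 2 / η) / η) = γ ^ 2 * (‖Φ‖ ^ 2 / η) := by field_simp
    rw [mul_add, h4] at h1
    have h5 : γ * (δ * γ * (2 * ‖Φ‖ ^ 2 / η) / 2) = δ * (γ ^ 2 * (‖Φ‖ ^ 2 / η)) := by ring
    rw [mul_add, h5] at h3
    linarith
  refine (frankWolfe_rate (fun t => G (Pseq t) - G Pstar) _ (by positivity) hrec t ht).trans_eq ?_
  field_simp
end
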